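/- Let n, ℓ be natural numbers. The map i^G : G_{n,ℓ} → G_{n+1,ℓ} from the Grassmannian of n-planes in ℝ^{n+ℓ} to the Grassmannian of (n+1)-planes in ℝ^{n+ℓ+1}, sending an n-plane a to the (n+1)-plane spanned by a and the (n+ℓ+1)-st unit vector, induces an isomorphism on homotopy groups π_i for 0 ≤ i < n and an epimorphism for i = n. -/

import Mathlib

/-!
STATEMENT 0. The stabilization map `i^G : G_{n,ℓ} → G_{n+1,ℓ}` of Grassmannians,
sending an `n`-plane `a ⊆ ℝ^{n+ℓ}` to the `(n+1)`-plane spanned by `a` and the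
`(n+ℓ+1)`-st unit vector, induces an isomorphism on homotopy groups `π_i` for
`0 ≤ i < n` and an epimorphism for `i = n`.

The Grassmannian `G_{m,ℓ}` is modeled as the space of symmetric idempotent real
`(m+ℓ) × (m+ℓ)` matrices of trace `m` (i.e. orthogonal projections onto
`m`-dimensional subspaces of `ℝ^{m+ℓ}`), with the subspace topology from matrices;
the stabilization map is `P ↦ P ⊕ (1)` (block sum with the `1 × 1` identity acting
on the new last coordinate).
-/

noncomputable section
open scoped Topology
open Matrix

/-- The map induced on generalized loops by a continuous map. -/
def GenLoop.induced {N X Y : Type*} [TopologicalSpace X] [TopologicalSpace Y]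
    (f : C(X, Y)) {x : X} (p : GenLoop N X x) : GenLoop N Y (f x) :=
  ⟨f.comp p.1, fun y hy => by simp [p.2 y hy]⟩

/-- The map induced on homotopy groups by a continuous map. -/
def HomotopyGroup.induced {X Y : Type*} [TopologicalSpace X] [TopologicalSpace Y]
    (N : Type*) (f : C(X, Y)) (x : X) :
    HomotopyGroup N X x → HomotopyGroup N Y (f x) :=
  Quotient.map (GenLoop.induced f)
    (fun _ _ h => h.map fun H => H.compContinuousMap f)

lemma trace_submatrix_equiv' {m n : Type*} [Fintype m] [Fintype n] (e : m ≃ n)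
    (A : Matrix n n ℝ) : (A.submatrix e e).trace = A.trace := by
  simp only [Matrix.trace, Matrix.diag, Matrix.submatrix_apply]
  exact Equiv.sum_comp e fun i => A i i

/-- The Grassmann manifold `G_{n,ℓ}` of `n`-planes in `ℝ^{n+ℓ}`, modeled as the space
of orthogonal projections of rank `n`: symmetric idempotent matrices of trace `n`. -/
def MatGrassmannian (n ℓ : ℕ) : Type :=
  {P : Matrix (Fin (n + ℓ)) (Fin (n + ℓ)) ℝ // Pᵀ = P ∧ P * P = P ∧ P.trace = n}

instance (n ℓ : ℕ) : TopologicalSpace (MatGrassmannian n ℓ) :=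
  inferInstanceAs (TopologicalSpace
    {P : Matrix (Fin (n + ℓ)) (Fin (n + ℓ)) ℝ // Pᵀ = P ∧ P * P = P ∧ P.trace = n})

/-- Reindexing equivalence `Fin (n+ℓ) ⊕ Fin 1 ≃ Fin (n+1+ℓ)` (the extra coordinate
is the last one, corresponding to the unit vector `e_{n+ℓ+1}`). -/
def grassmannReindex (n ℓ : ℕ) : Fin (n + ℓ) ⊕ Fin 1 ≃ Fin (n + 1 + ℓ) :=
  finSumFinEquiv.trans (finCongr (by omega))

/-- The stabilization map `i^G : G_{n,ℓ} → G_{n+1,ℓ}`, sending the projection onto a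
plane `a` to the projection onto `a ⊕ ℝ·e_{n+ℓ+1}`. -/
def grassmannInclusion (n ℓ : ℕ) : C(MatGrassmannian n ℓ, MatGrassmannian (n + 1) ℓ) where
  toFun P :=
    ⟨(Matrix.fromBlocks P.1 0 0 (1 : Matrix (Fin 1) (Fin 1) ℝ)).submatrix
        (grassmannReindex n ℓ).symm (grassmannReindex n ℓ).symm, by
      obtain ⟨P, hs, hi, ht⟩ := P
      refine ⟨?_, ?_, ?_⟩
      · rw [Matrix.transpose_submatrix, Matrix.fromBlocks_transpose]
        simp [hs]
      · rw [Matrix.submatrix_mul_equiv _ _ _ (grassmannReindex n ℓ).symm _,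
          Matrix.fromBlocks_multiply]
        simp [hi]
      · rw [trace_submatrix_equiv']
        simp only [Matrix.trace, Matrix.diag, Fintype.sum_sum_type,
          Matrix.fromBlocks_apply₁₁, Matrix.fromBlocks_apply₂₂]
        have : ∑ i : Fin (n + ℓ), P i i = (n : ℝ) := ht
        rw [this]
        push_cast
        simp⟩
  continuous_toFun := by
    apply Continuous.subtype_mk
    exact (Continuous.matrix_fromBlocks continuous_subtype_val continuous_const
      continuous_const continuous_const).matrix_submatrix _ _

/-!
Over a compact retract `K` of a vector space of dimension less than `m`, every bundle of
`m`-planes is trivial, and by Sard's theorem its nowhere zero sections are dense. Given a map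
`K → G_{m,ℓ}`, `x ↦ a_x`, project a fixed unit vector `e` onto the planes `a_x` and perturb the
result to a nowhere zero section `w` with `w_x · e > 0` wherever `e ∈ a_x`. Replacing the line
`ℝ w_x` of `a_x` by `ℝ ((1 - r) w_x + r e)`, `0 ≤ r ≤ 1`, deforms `a_x` into a plane containing `e`,
and does not move it if `e ∈ a_x` already. With `m = n + 1` and `e` the last unit vector, this
compresses `K` into the image of `i^G` relative to the points already there; `K = [0,1]^i`
yields surjectivity on `π_i` and `K = [0,1] × [0,1]^i` injectivity.
-/

open unitInterval

section Idempotents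

variable {R : Type*}

lemma semiconjBy_mul_add_one_sub_mul_one_sub [Ring R] {p q : R} (hp : IsIdempotentElem p)
    (hq : IsIdempotentElem q) : SemiconjBy (p * q + (1 - p) * (1 - q)) q p := by
  rw [SemiconjBy, add_mul, mul_add, mul_assoc p q q, hq.eq, ← mul_assoc p p q, hp.eq,
    mul_assoc (1 - p), hq.one_sub_mul_self, ← mul_assoc p (1 - p), hp.mul_one_sub_self,
    mul_zero, zero_mul]

lemma isConj_of_continuous_of_isIdempotentElem [NormedRing R] [HasSummableGeomSeries R]
    {T : Type*} [TopologicalSpace T] [PreconnectedSpace T] {p : T → R} (hp : Continuous p)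
    (hidem : ∀ t, IsIdempotentElem (p t)) (s t : T) : IsConj (p s) (p t) := by
  have : Std.Symm fun s t => IsConj (p s) (p t) := ⟨fun _ _ h => h.symm⟩
  refine PreconnectedSpace.induction₂ (fun s t => IsConj (p s) (p t)) (fun s => ?_)
    ⟨fun _ _ _ h h' => h.trans h'⟩ s t
  -- `z t` intertwines `p s` and `p t`, and `z s = 1`.
  let z : T → R := fun t => p t * p s + (1 - p t) * (1 - p s)
  have hz : Continuous z := by fun_prop
  have hzs : z s = 1 := by
    simp only [z, (hidem s).eq, (hidem s).one_sub.eq, add_sub_cancel]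
  have hunit : ∀ᶠ t in 𝓝 s, IsUnit (z t) :=
    hz.continuousAt (Units.isOpen.mem_nhds (by simp [hzs]))
  filter_upwards [hunit] with t ht
  exact ⟨ht.unit, semiconjBy_mul_add_one_sub_mul_one_sub (hidem t) (hidem s)⟩

lemma isConj_comp_of_homotopic [NormedRing R] [CompleteSpace R] {X Y : Type*}
    [TopologicalSpace X] [CompactSpace X] [TopologicalSpace Y] {f g : C(X, Y)}
    (h : f.Homotopic g) {p : C(Y, R)} (hp : IsIdempotentElem p) :
    IsConj (p.comp f) (p.comp g) := by
  obtain ⟨H⟩ := h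
  have hpath : Continuous fun t : I => p.comp (H.curry t) := by fun_prop
  have hidem (t : I) : IsIdempotentElem (p.comp (H.curry t)) :=
    ContinuousMap.ext fun x => DFunLike.congr_fun hp (H.curry t x)
  have hconj := isConj_of_continuous_of_isIdempotentElem hpath hidem 0 1
  rwa [H.curry_zero, H.curry_one] at hconj

lemma exists_isConj_const_of_contractibleSpace [NormedRing R] [CompleteSpace R] {X : Type*}
    [TopologicalSpace X] [CompactSpace X] [ContractibleSpace X] {p : C(X, R)}
    (hp : IsIdempotentElem p) : ∃ x₀, IsConj (ContinuousMap.const X (p x₀)) p := by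
  obtain ⟨x₀, hx₀⟩ := id_nullhomotopic X
  exact ⟨x₀, (isConj_comp_of_homotopic hx₀ hp).symm⟩

end Idempotents

section Sections

/-- `K` is a retract of `E`: there are continuous maps `K → E → K` composing to the identity. -/
def IsRetract (K E : Type*) [TopologicalSpace K] [TopologicalSpace E] : Prop :=
  ∃ (i : C(K, E)) (r : C(E, K)), r.comp i = ContinuousMap.id K

namespace IsRetract

lemma unitInterval : IsRetract I ℝ :=
  ⟨⟨Subtype.val, continuous_subtype_val⟩, ⟨Set.projIcc 0 1 zero_le_one, continuous_projIcc⟩,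
    ContinuousMap.ext fun t => Set.projIcc_val zero_le_one t⟩

lemma pi {N : Type*} {K E : N → Type*} [∀ j, TopologicalSpace (K j)]
    [∀ j, TopologicalSpace (E j)] (h : ∀ j, IsRetract (K j) (E j)) :
    IsRetract (∀ j, K j) (∀ j, E j) := by
  choose i r hri using h
  exact ⟨.piMap i, .piMap r, ContinuousMap.ext fun x => funext fun j =>
    DFunLike.congr_fun (hri j) (x j)⟩

variable {K K' E E' : Type*} [TopologicalSpace K] [TopologicalSpace K']
  [TopologicalSpace E] [TopologicalSpace E']

lemma prod (h : IsRetract K E) (h' : IsRetract K' E') : IsRetract (K × K') (E × E') := by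
  obtain ⟨i, r, hri⟩ := h
  obtain ⟨i', r', hri'⟩ := h'
  exact ⟨i.prodMap i', r.prodMap r', ContinuousMap.ext fun x =>
    Prod.ext (DFunLike.congr_fun hri x.1) (DFunLike.congr_fun hri' x.2)⟩

lemma contractibleSpace [ContractibleSpace E] (h : IsRetract K E) : ContractibleSpace K := by
  obtain ⟨i, r, hri⟩ := h
  rw [contractible_iff_id_nullhomotopic, ← hri]
  exact ((id_nullhomotopic E).comp_left i).comp_right r

end IsRetract

variable {E F : Type*} [NormedAddCommGroup E] [NormedSpace ℝ E] [FiniteDimensional ℝ E]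
  [NormedAddCommGroup F] [NormedSpace ℝ F] [FiniteDimensional ℝ F]

lemma dense_setOf_continuousMap_forall_ne_zero (hEF : Module.finrank ℝ E < Module.finrank ℝ F) :
    Dense {f : C(E, F) | ∀ x, f x ≠ 0} := by
  have : CompleteSpace F := FiniteDimensional.complete ℝ F
  refine dense_closure.1 (ContinuousMap.dense_setOfPred_contDiff.mono fun f hf => ?_)
  have hf₁ : ContDiff ℝ 1 f := (Set.mem_ofPred.1 hf).of_le (mod_cast le_top)
  have hrange : Dense (Set.range f)ᶜ := hf₁.dense_compl_range_of_finrank_lt_finrank hEF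
  have htranslate : Continuous fun c : F => f - ContinuousMap.const E c := by fun_prop
  have hmaps : Set.MapsTo (fun c : F => f - ContinuousMap.const E c) (Set.range f)ᶜ
      {g | ∀ x, g x ≠ 0} := fun c hc x hx => hc ⟨x, sub_eq_zero.1 hx⟩
  have hf_mem := map_mem_closure htranslate (hrange 0) hmaps
  have hzero : f - ContinuousMap.const E 0 = f := sub_zero f
  rwa [hzero] at hf_mem

variable {K : Type*} [TopologicalSpace K]

lemma IsRetract.dense_setOf_forall_ne_zero (hK : IsRetract K E)
    (hEF : Module.finrank ℝ E < Module.finrank ℝ F) :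
    Dense {f : C(K, F) | ∀ x, f x ≠ 0} := by
  obtain ⟨i, r, hri⟩ := hK
  have hsurj : Function.Surjective fun f : C(E, F) => f.comp i := fun f =>
    ⟨f.comp r, by simp only [ContinuousMap.comp_assoc, hri, ContinuousMap.comp_id]⟩
  refine (hsurj.denseRange.dense_image (ContinuousMap.continuous_precomp i)
    (dense_setOf_continuousMap_forall_ne_zero hEF)).mono ?_
  rintro _ ⟨f, hf, rfl⟩ x
  exact hf (i x)

lemma IsRetract.mem_closure_nowhere_zero_sections [CompactSpace K] (hK : IsRetract K E)
    {P : C(K, F →L[ℝ] F)} (hP : IsIdempotentElem P)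
    (hrank : ∀ x, Module.finrank ℝ E < Module.finrank ℝ (P x).range)
    {s : C(K, F)} (hs : ∀ x, P x (s x) = s x) :
    s ∈ closure {w : C(K, F) | ∀ x, P x (w x) = w x ∧ w x ≠ 0} := by
  have : CompleteSpace F := FiniteDimensional.complete ℝ F
  have := hK.contractibleSpace
  obtain ⟨x₀, u, hu⟩ := exists_isConj_const_of_contractibleSpace hP
  have hu (x : K) : P x * u.1 x = u.1 x * P x₀ := (DFunLike.congr_fun hu x).symm
  have hinv (x : K) : u.1 x * u⁻¹.1 x = 1 := DFunLike.congr_fun u.mul_inv x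
  have hinv' (x : K) : u⁻¹.1 x * u.1 x = 1 := DFunLike.congr_fun u.inv_mul x
  let V := (P x₀).range
  have hV (w : V) : P x₀ w = w := by
    obtain ⟨_, y, rfl⟩ := w
    exact DFunLike.congr_fun (DFunLike.congr_fun hP x₀) y
  let Φ : C(K, V) → C(K, F) := fun τ => ⟨fun x => u.1 x (τ x), by fun_prop⟩
  have hΦ : Continuous Φ := by
    refine ContinuousMap.continuous_of_continuous_uncurry _ ?_
    dsimp [Φ]
    fun_prop
  let s₀ : C(K, V) := ⟨fun x => ⟨P x₀ (u⁻¹.1 x (s x)), _, rfl⟩, by fun_prop⟩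
  have hs₀ : Φ s₀ = s := by
    ext x
    calc u.1 x (P x₀ (u⁻¹.1 x (s x))) = (P x * u.1 x * u⁻¹.1 x) (s x) := by rw [hu]; rfl
      _ = s x := by rw [mul_assoc, hinv, mul_one, hs]
  rw [← hs₀]
  refine map_mem_closure hΦ (hK.dense_setOf_forall_ne_zero (hrank x₀) s₀) fun τ hτ x => ⟨?_, ?_⟩
  · calc P x (u.1 x (τ x)) = u.1 x (P x₀ (τ x)) := DFunLike.congr_fun (hu x) (τ x : F)
      _ = u.1 x (τ x) := by rw [hV]
  · intro h
    have hτx : (τ x : F) = 0 :=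
      calc (τ x : F) = u⁻¹.1 x (u.1 x (τ x)) := (DFunLike.congr_fun (hinv' x) (τ x : F)).symm
        _ = 0 := by rw [show u.1 x (τ x) = 0 from h, map_zero]
    exact hτ x (Subtype.ext hτx)

end Sections

section LineProjection

variable {ι : Type*} [Fintype ι]

/-- The matrix of the orthogonal projection of `ℝ^ι` onto the line spanned by `w`; since
`0⁻¹ = 0`, it is `0` for `w = 0`. -/
def lineProj (w : ι → ℝ) : Matrix ι ι ℝ := (w ⬝ᵥ w)⁻¹ • vecMulVec w w

lemma lineProj_mulVec (w x : ι → ℝ) : lineProj w *ᵥ x = ((w ⬝ᵥ x) / (w ⬝ᵥ w)) • w := by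
  rw [lineProj, smul_mulVec, vecMulVec_mulVec, op_smul_eq_smul, smul_smul, div_eq_inv_mul]

lemma lineProj_mulVec_self (w : ι → ℝ) : lineProj w *ᵥ w = w := by
  rcases eq_or_ne w 0 with rfl | hw
  · exact mulVec_zero _
  · rw [lineProj_mulVec, div_self (dotProduct_self_eq_zero.not.2 hw), one_smul]

lemma mul_lineProj (A : Matrix ι ι ℝ) (w : ι → ℝ) :
    A * lineProj w = (w ⬝ᵥ w)⁻¹ • vecMulVec (A *ᵥ w) w := by
  rw [lineProj, Matrix.mul_smul, mul_vecMulVec]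

lemma isStarProjection_lineProj (w : ι → ℝ) : IsStarProjection (lineProj w) where
  isIdempotentElem := by
    rw [IsIdempotentElem, mul_lineProj, lineProj_mulVec_self, lineProj]
  isSelfAdjoint := by
    simp [IsSelfAdjoint, star_eq_conjTranspose, lineProj, transpose_vecMulVec]

lemma trace_lineProj {w : ι → ℝ} (hw : w ≠ 0) : (lineProj w).trace = 1 := by
  rw [lineProj, trace_smul, trace_vecMulVec, smul_eq_mul,
    inv_mul_cancel₀ (dotProduct_self_eq_zero.not.2 hw)]

lemma lineProj_smul {c : ℝ} (hc : c ≠ 0) (w : ι → ℝ) : lineProj (c • w) = lineProj w := by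
  simp only [lineProj, smul_dotProduct, dotProduct_smul, smul_vecMulVec, vecMulVec_smul,
    smul_eq_mul, smul_smul]
  congr 1
  field_simp

lemma continuous_lineProj {X : Type*} [TopologicalSpace X] {w : X → ι → ℝ}
    (hw : Continuous w) (hw0 : ∀ x, w x ≠ 0) : Continuous fun x => lineProj (w x) :=
  ((hw.dotProduct hw).inv₀ fun x => dotProduct_self_eq_zero.not.2 (hw0 x)).smul
    (hw.matrix_vecMulVec hw)

lemma mul_lineProj_eq_zero {A : Matrix ι ι ℝ} {w : ι → ℝ} (h : A *ᵥ w = 0) :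
    A * lineProj w = 0 := by
  rw [mul_lineProj, h, zero_vecMulVec, smul_zero]

lemma mul_lineProj_eq_self {A : Matrix ι ι ℝ} {w : ι → ℝ} (h : A *ᵥ w = w) :
    A * lineProj w = lineProj w := by
  rw [mul_lineProj, h, lineProj]

/-- The matrix of the orthogonal projection onto `range P + ℝ y`, for `P` the matrix of an
orthogonal projection. -/
def addLine (P : Matrix ι ι ℝ) (y : ι → ℝ) : Matrix ι ι ℝ := P + lineProj (y - P *ᵥ y)

section AddLine

variable {P : Matrix ι ι ℝ} {y : ι → ℝ}

lemma mulVec_sub_mulVec_self (hP : IsIdempotentElem P) (y : ι → ℝ) : P *ᵥ (y - P *ᵥ y) = 0 := by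
  rw [mulVec_sub, mulVec_mulVec, hP.eq, sub_self]

lemma isStarProjection_addLine (hP : IsStarProjection P) (y : ι → ℝ) :
    IsStarProjection (addLine P y) :=
  hP.add (isStarProjection_lineProj _)
    (mul_lineProj_eq_zero (mulVec_sub_mulVec_self hP.isIdempotentElem y))

lemma trace_addLine (hy : P *ᵥ y ≠ y) : (addLine P y).trace = P.trace + 1 := by
  rw [addLine, trace_add, trace_lineProj (sub_ne_zero.2 hy.symm)]

lemma addLine_mulVec_self (hP : IsStarProjection P) (y : ι → ℝ) : addLine P y *ᵥ y = y := by
  set u := y - P *ᵥ y with hu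
  have hPu : P * lineProj u = 0 :=
    mul_lineProj_eq_zero (mulVec_sub_mulVec_self hP.isIdempotentElem y)
  have huP : lineProj u * P = 0 := by
    simpa [hP.isSelfAdjoint.star_eq, (isStarProjection_lineProj u).isSelfAdjoint.star_eq]
      using congrArg star hPu
  have hLy : lineProj u *ᵥ y = u :=
    calc lineProj u *ᵥ y = lineProj u *ᵥ (u + P *ᵥ y) := by rw [hu, sub_add_cancel]
      _ = u := by
        rw [mulVec_add, lineProj_mulVec_self, mulVec_mulVec, huP, zero_mulVec, add_zero]
  rw [addLine, add_mulVec, hLy, hu, add_sub_cancel]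

lemma continuous_addLine {X : Type*} [TopologicalSpace X] {P : X → Matrix ι ι ℝ} {y : X → ι → ℝ}
    (hP : Continuous P) (hy : Continuous y) (hPy : ∀ x, P x *ᵥ y x ≠ y x) :
    Continuous fun x => addLine (P x) (y x) :=
  hP.add (continuous_lineProj (hy.sub (hP.matrix_mulVec hy)) fun x => sub_ne_zero.2 (hPy x).symm)

end AddLine

/-- For `w` in the range of an orthogonal projection `P`, the projection obtained by replacing
`w` by `y`: its range is `(range P ∩ w^⊥) + ℝ y`. -/
def exchangeLine (P : Matrix ι ι ℝ) (w y : ι → ℝ) : Matrix ι ι ℝ := addLine (P - lineProj w) y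

section ExchangeLine

variable {P : Matrix ι ι ℝ} {w y : ι → ℝ}

lemma isStarProjection_sub_lineProj (hP : IsStarProjection P) (hPw : P *ᵥ w = w) :
    IsStarProjection (P - lineProj w) :=
  (isStarProjection_lineProj w).sub_of_mul_eq_right hP (mul_lineProj_eq_self hPw)

lemma isStarProjection_exchangeLine (hP : IsStarProjection P) (hPw : P *ᵥ w = w) (y : ι → ℝ) :
    IsStarProjection (exchangeLine P w y) :=
  isStarProjection_addLine (isStarProjection_sub_lineProj hP hPw) y

lemma exchangeLine_mulVec_self (hP : IsStarProjection P) (hPw : P *ᵥ w = w) (y : ι → ℝ) :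
    exchangeLine P w y *ᵥ y = y :=
  addLine_mulVec_self (isStarProjection_sub_lineProj hP hPw) y

lemma sub_lineProj_mulVec_ne (hP : IsIdempotentElem P) (hw : w ≠ 0) (hPw : P *ᵥ w = w)
    (hy : P *ᵥ y = y → w ⬝ᵥ y ≠ 0) : (P - lineProj w) *ᵥ y ≠ y := by
  intro h
  have hPy : P *ᵥ y = y :=
    calc P *ᵥ y = (P * (P - lineProj w)) *ᵥ y := by rw [← mulVec_mulVec, h]
      _ = y := by rw [mul_sub, hP.eq, mul_lineProj_eq_self hPw, h]
  have hLy : lineProj w *ᵥ y = 0 := by simpa [sub_mulVec, hPy] using h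
  rw [lineProj_mulVec, smul_eq_zero_iff_left hw, div_eq_zero_iff, dotProduct_self_eq_zero,
    or_iff_left hw] at hLy
  exact hy hPy hLy

lemma trace_exchangeLine (hP : IsIdempotentElem P) (hw : w ≠ 0) (hPw : P *ᵥ w = w)
    (hy : P *ᵥ y = y → w ⬝ᵥ y ≠ 0) : (exchangeLine P w y).trace = P.trace := by
  rw [exchangeLine, trace_addLine (sub_lineProj_mulVec_ne hP hw hPw hy), trace_sub,
    trace_lineProj hw, sub_add_cancel]

lemma exchangeLine_eq_self (hw : w ≠ 0) (hPy : P *ᵥ y = y) (hwy : w ⬝ᵥ y ≠ 0) :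
    exchangeLine P w y = P := by
  have hc : (w ⬝ᵥ y) / (w ⬝ᵥ w) ≠ 0 := div_ne_zero hwy (dotProduct_self_eq_zero.not.2 hw)
  rw [exchangeLine, addLine, sub_mulVec, hPy, sub_sub_cancel, lineProj_mulVec, lineProj_smul hc,
    sub_add_cancel]

lemma continuous_exchangeLine {X : Type*} [TopologicalSpace X] {P : X → Matrix ι ι ℝ}
    {w y : X → ι → ℝ} (hPc : Continuous P) (hwc : Continuous w) (hyc : Continuous y)
    (hP : ∀ x, IsIdempotentElem (P x)) (hw : ∀ x, w x ≠ 0) (hPw : ∀ x, P x *ᵥ w x = w x)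
    (hy : ∀ x, P x *ᵥ y x = y x → w x ⬝ᵥ y x ≠ 0) :
    Continuous fun x => exchangeLine (P x) (w x) (y x) :=
  continuous_addLine (hPc.sub (continuous_lineProj hwc hw)) hyc fun x =>
    sub_lineProj_mulVec_ne (hP x) (hw x) (hPw x) (hy x)

lemma dotProduct_segment_pos {e : ι → ℝ} (hw : w ≠ 0) (hPw : P *ᵥ w = w)
    (he : P *ᵥ e = e → 0 < w ⬝ᵥ e) (r : I)
    (h : P *ᵥ ((1 - r : ℝ) • w + (r : ℝ) • e) = (1 - r : ℝ) • w + (r : ℝ) • e) :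
    0 < w ⬝ᵥ ((1 - r : ℝ) • w + (r : ℝ) • e) := by
  have hww : 0 < w ⬝ᵥ w := by simpa using dotProduct_self_star_pos_iff.2 hw
  rw [dotProduct_add, dotProduct_smul, dotProduct_smul, smul_eq_mul, smul_eq_mul]
  rcases eq_or_ne r 0 with rfl | hr
  · simpa using hww
  · have hr : 0 < (r : ℝ) := unitInterval.pos_iff_ne_zero.2 hr
    have hPe : P *ᵥ e = e := by
      rw [mulVec_add, mulVec_smul, mulVec_smul, hPw, add_right_inj] at h
      exact smul_right_injective _ hr.ne' h
    have := mul_nonneg (sub_nonneg.2 r.2.2) hww.le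
    have := mul_pos hr (he hPe)
    linarith

end ExchangeLine

end LineProjection

section Compression

variable {X Y : Type*} [TopologicalSpace X] [TopologicalSpace Y]

/-- Every map `K → Y` can be pushed into the image of `j` by a homotopy that does not move the
points already mapped there. -/
def HasCompression (K : Type*) [TopologicalSpace K] (j : C(X, Y)) : Prop :=
  ∀ F : C(K, Y), ∃ G : C(K, X), F.HomotopicRel (j.comp G) (F ⁻¹' Set.range j)

namespace HasCompression

variable {N : Type*} {j : C(X, Y)}

lemma surjective_induced (h : HasCompression (N → I) j) (hj : Function.Injective j) (a : X) :
    Function.Surjective (HomotopyGroup.induced N j a) := by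
  rintro ⟨f⟩
  obtain ⟨G, hfG⟩ := h f.1
  have hboundary : Cube.boundary N ⊆ f.1 ⁻¹' Set.range j := fun y hy => ⟨a, (f.2 y hy).symm⟩
  have hG : ∀ y ∈ Cube.boundary N, G y = a := fun y hy =>
    hj ((hfG.fst_eq_snd (hboundary hy)).symm.trans (f.2 y hy))
  exact ⟨⟦⟨G, hG⟩⟧, Quotient.sound (hfG.symm.map fun H =>
    ⟨H.toHomotopy, fun t y hy => H.prop' t y (hboundary hy)⟩)⟩

lemma injective_induced (h : HasCompression (I × (N → I)) j) (hj : Function.Injective j) (a : X) :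
    Function.Injective (HomotopyGroup.induced N j a) := by
  rintro ⟨f⟩ ⟨g⟩ hfg
  obtain ⟨H⟩ : GenLoop.Homotopic (GenLoop.induced j f) (GenLoop.induced j g) :=
    Quotient.exact hfg
  obtain ⟨G, hHG⟩ := h H.toContinuousMap
  have hG {z : I × (N → I)} {p : X} (hz : H z = j p) : G z = p :=
    hj ((hHG.fst_eq_snd ⟨p, hz.symm⟩).symm.trans hz)
  exact Quotient.sound ⟨{
    toContinuousMap := G
    map_zero_left := fun x => hG (H.apply_zero x)
    map_one_left := fun x => hG (H.apply_one x)
    prop' := fun t _ hy => hG (H.eq_fst t hy) }⟩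

end HasCompression

end Compression

namespace MatGrassmannian

variable {m ℓ : ℕ}

lemma isStarProjection (A : MatGrassmannian m ℓ) : IsStarProjection A.1 where
  isIdempotentElem := A.2.2.1
  isSelfAdjoint := by
    rw [IsSelfAdjoint, star_eq_conjTranspose, conjTranspose_eq_transpose_of_trivial, A.2.1]

/-- The point of the Grassmannian given by an orthogonal projection of trace `m`. -/
def ofIsStarProjection (P : Matrix (Fin (m + ℓ)) (Fin (m + ℓ)) ℝ) (hP : IsStarProjection P)
    (htr : P.trace = m) : MatGrassmannian m ℓ :=
  ⟨P, by simpa [IsSelfAdjoint, star_eq_conjTranspose] using hP.isSelfAdjoint,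
    hP.isIdempotentElem, htr⟩

lemma continuous_val : Continuous (Subtype.val : MatGrassmannian m ℓ → Matrix _ _ ℝ) :=
  continuous_subtype_val

variable {K : Type*} [TopologicalSpace K]

lemma exists_homotopicRel_of_section (F : C(K, MatGrassmannian m ℓ)) (e : Fin (m + ℓ) → ℝ)
    (w : C(K, Fin (m + ℓ) → ℝ)) (hw : ∀ x, w x ≠ 0) (hFw : ∀ x, (F x).1 *ᵥ w x = w x)
    (he : ∀ x, (F x).1 *ᵥ e = e → 0 < w x ⬝ᵥ e) :
    ∃ G : C(K, MatGrassmannian m ℓ), F.HomotopicRel G {x | (F x).1 *ᵥ e = e} ∧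
      ∀ x, (G x).1 *ᵥ e = e := by
  let y : I × K → Fin (m + ℓ) → ℝ := fun z => (1 - z.1 : ℝ) • w z.2 + (z.1 : ℝ) • e
  have hy : Continuous y := by fun_prop
  have hwy (z : I × K) (h : (F z.2).1 *ᵥ y z = y z) : w z.2 ⬝ᵥ y z ≠ 0 :=
    (dotProduct_segment_pos (hw z.2) (hFw z.2) (he z.2) z.1 h).ne'
  have hproj (x : K) := (F x).isStarProjection
  let H : C(I × K, MatGrassmannian m ℓ) :=
    { toFun := fun z => ofIsStarProjection (exchangeLine (F z.2).1 (w z.2) (y z))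
        (isStarProjection_exchangeLine (hproj z.2) (hFw z.2) (y z))
        (by rw [trace_exchangeLine (hproj z.2).isIdempotentElem (hw z.2) (hFw z.2) (hwy z),
          (F z.2).2.2.2])
      continuous_toFun := (continuous_exchangeLine
        (continuous_val.comp (F.continuous.comp continuous_snd)) (by fun_prop) hy
        (fun z => (hproj z.2).isIdempotentElem) (fun z => hw z.2) (fun z => hFw z.2)
        hwy).subtype_mk _ }
  have hH_fixed {z : I × K} (h : (F z.2).1 *ᵥ y z = y z) : H z = F z.2 :=
    Subtype.ext (exchangeLine_eq_self (hw z.2) h (hwy z h))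
  have hHy (z : I × K) : (H z).1 *ᵥ y z = y z :=
    exchangeLine_mulVec_self (hproj z.2) (hFw z.2) (y z)
  refine ⟨H.curry 1, ⟨⟨⟨H, fun x => hH_fixed ?_, fun x => rfl⟩, fun r x hx => hH_fixed ?_⟩⟩,
    fun x => ?_⟩
  · simp [y, hFw]
  · simp only [y, mulVec_add, mulVec_smul, hFw]
    rw [show (F x).1 *ᵥ e = e from hx]
  · simpa [y] using hHy (1, x)

variable {E : Type*} [NormedAddCommGroup E] [NormedSpace ℝ E] [FiniteDimensional ℝ E]
  [CompactSpace K]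

lemma exists_section_near (hK : IsRetract K E) (hE : Module.finrank ℝ E < m)
    (F : C(K, MatGrassmannian m ℓ)) {s : C(K, Fin (m + ℓ) → ℝ)}
    (hs : ∀ x, (F x).1 *ᵥ s x = s x) :
    s ∈ closure {w : C(K, Fin (m + ℓ) → ℝ) | ∀ x, (F x).1 *ᵥ w x = w x ∧ w x ≠ 0} := by
  let Φ : Matrix (Fin (m + ℓ)) (Fin (m + ℓ)) ℝ ≃ₐ[ℝ] (Fin (m + ℓ) → ℝ) →L[ℝ] (Fin (m + ℓ) → ℝ) :=
    toLinAlgEquiv'.trans (Module.End.toContinuousLinearMap _)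
  have hΦ : Continuous Φ := LinearMap.continuous_of_finiteDimensional Φ.toLinearMap
  let P : C(K, (Fin (m + ℓ) → ℝ) →L[ℝ] (Fin (m + ℓ) → ℝ)) :=
    ⟨fun x => Φ (F x).1, hΦ.comp (continuous_val.comp F.continuous)⟩
  have hP : IsIdempotentElem P :=
    ContinuousMap.ext fun x => (F x).isStarProjection.isIdempotentElem.map Φ
  have hrank (x : K) : Module.finrank ℝ (P x).range = m := by
    have hidem : IsIdempotentElem (toLin' (F x).1) :=
      (F x).isStarProjection.isIdempotentElem.map toLinAlgEquiv'
    have := (LinearMap.IsIdempotentElem.isProj_range _ hidem).trace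
    rw [trace_toLin'_eq, (F x).2.2.2] at this
    exact_mod_cast this.symm
  exact hK.mem_closure_nowhere_zero_sections hP (fun x => (hrank x).symm ▸ hE) hs

lemma exists_homotopicRel_fixing_single (hK : IsRetract K E) (hE : Module.finrank ℝ E < m)
    (F : C(K, MatGrassmannian m ℓ)) (j : Fin (m + ℓ)) :
    ∃ G : C(K, MatGrassmannian m ℓ),
      F.HomotopicRel G {x | (F x).1 *ᵥ Pi.single j 1 = Pi.single j 1} ∧
      ∀ x, (G x).1 *ᵥ Pi.single j 1 = Pi.single j 1 := by
  let e : Fin (m + ℓ) → ℝ := Pi.single j 1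
  let s : C(K, Fin (m + ℓ) → ℝ) :=
    ⟨fun x => (F x).1 *ᵥ e, (continuous_val.comp F.continuous).matrix_mulVec continuous_const⟩
  have hs (x : K) : (F x).1 *ᵥ s x = s x := by
    simp only [s, ContinuousMap.coe_mk, mulVec_mulVec, (F x).2.2.1]
  obtain ⟨w, hw, hdist⟩ := Metric.mem_closure_iff.1 (exists_section_near hK hE F hs) 1 one_pos
  refine exists_homotopicRel_of_section F e w (fun x => (hw x).2) (fun x => (hw x).1) fun x hx => ?_
  have hnear : |1 - w x j| < 1 :=
    calc |1 - w x j| = dist (s x j) (w x j) := by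
          rw [Real.dist_eq, show s x = e from hx, show e j = 1 from Pi.single_eq_same j 1]
      _ ≤ dist (s x) (w x) := dist_le_pi_dist _ _ _
      _ ≤ dist s w := ContinuousMap.dist_apply_le_dist x
      _ < 1 := hdist
  rw [dotProduct_single_one]
  linarith [(abs_lt.1 hnear).2]

end MatGrassmannian

section FixedBasisVector

variable {ι κ : Type*} [Fintype ι] [DecidableEq ι] [Fintype κ] [DecidableEq κ]

lemma submatrix_mulVec_single_eq_iff (g : ι ≃ κ) (B : Matrix κ κ ℝ) (i : ι) :
    B.submatrix g g *ᵥ Pi.single i 1 = Pi.single i 1 ↔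
      B *ᵥ Pi.single (g i) 1 = Pi.single (g i) 1 := by
  have hsingle : (Pi.single (g i) 1 : κ → ℝ) ∘ g = Pi.single i 1 := by
    simpa using Pi.single_comp_equiv g (g i) (1 : ℝ)
  rw [submatrix_mulVec_equiv, ← hsingle, Function.comp_assoc, g.self_comp_symm, Function.comp_id,
    g.surjective.injective_comp_right.eq_iff]

lemma fromBlocks_one_mulVec_single (A : Matrix ι ι ℝ) :
    fromBlocks A 0 0 (1 : Matrix (Fin 1) (Fin 1) ℝ) *ᵥ Pi.single (Sum.inr 0) 1 =
      Pi.single (Sum.inr 0) 1 := by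
  rw [mulVec_single_one]
  ext (i | i) <;> simp [Fin.fin_one_eq_zero]

lemma eq_fromBlocks_of_mulVec_single {M : Matrix (ι ⊕ Fin 1) (ι ⊕ Fin 1) ℝ} (hM : M.IsSymm)
    (h : M *ᵥ Pi.single (Sum.inr 0) 1 = Pi.single (Sum.inr 0) 1) :
    M = fromBlocks M.toBlocks₁₁ 0 0 1 := by
  rw [mulVec_single_one] at h
  have hcol (i : ι ⊕ Fin 1) : M i (Sum.inr 0) = Pi.single (M := fun _ => ℝ) (Sum.inr 0) 1 i :=
    congrFun h i
  refine M.fromBlocks_toBlocks.symm.trans (fromBlocks_inj.2 ⟨rfl, ?_, ?_, ?_⟩) <;> ext i k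
  · simp [toBlocks₁₂, Fin.fin_one_eq_zero k, hcol]
  · rw [toBlocks₂₁, of_apply, hM.apply, Fin.fin_one_eq_zero i, hcol]
    simp
  · rw [toBlocks₂₂, of_apply, Fin.fin_one_eq_zero i, Fin.fin_one_eq_zero k, hcol]
    simp

end FixedBasisVector

section GrassmannInclusion

variable {n ℓ : ℕ}

lemma isEmbedding_grassmannInclusion : Topology.IsEmbedding (grassmannInclusion n ℓ) := by
  let g := grassmannReindex n ℓ
  let pad : Matrix (Fin (n + ℓ)) (Fin (n + ℓ)) ℝ → Matrix (Fin (n + 1 + ℓ)) (Fin (n + 1 + ℓ)) ℝ :=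
    fun A => (fromBlocks A 0 0 (1 : Matrix (Fin 1) (Fin 1) ℝ)).submatrix g.symm g.symm
  have hpad : Continuous pad :=
    (continuous_id.matrix_fromBlocks continuous_const continuous_const
      continuous_const).matrix_submatrix _ _
  have hcorner : Function.LeftInverse (fun B => B.submatrix (g ∘ Sum.inl) (g ∘ Sum.inl)) pad := by
    intro A
    ext i k
    simp [pad]
  have hpad_emb : Topology.IsEmbedding pad :=
    hcorner.isEmbedding (continuous_id.matrix_submatrix _ _) hpad
  exact .of_comp (grassmannInclusion n ℓ).continuous MatGrassmannian.continuous_val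
    (hpad_emb.comp .subtypeVal)

lemma range_grassmannInclusion : Set.range (grassmannInclusion n ℓ) =
    {P | P.1 *ᵥ Pi.single (grassmannReindex n ℓ (Sum.inr 0)) 1 =
      Pi.single (grassmannReindex n ℓ (Sum.inr 0)) 1} := by
  let g := grassmannReindex n ℓ
  ext P
  rw [Set.mem_ofPred_eq, ← submatrix_mulVec_single_eq_iff]
  constructor
  · rintro ⟨A, rfl⟩
    have hblock : (grassmannInclusion n ℓ A).1.submatrix g g = fromBlocks A.1 0 0 1 := by
      change ((fromBlocks A.1 0 0 1).submatrix g.symm g.symm).submatrix g g = _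
      rw [submatrix_submatrix, g.symm_comp_self, submatrix_id_id]
    rw [hblock, fromBlocks_one_mulVec_single]
  · intro hfix
    let M := P.1.submatrix g g
    have hM : M.IsSymm := IsSymm.submatrix P.2.1 g
    have hblock : M = fromBlocks M.toBlocks₁₁ 0 0 1 := eq_fromBlocks_of_mulVec_single hM hfix
    have hidem : M.toBlocks₁₁ * M.toBlocks₁₁ = M.toBlocks₁₁ := by
      have hMM : M * M = M := by rw [submatrix_mul_equiv, P.2.2.1]
      rw [hblock, fromBlocks_multiply] at hMM
      simpa using congrArg toBlocks₁₁ hMM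
    have htrace : M.toBlocks₁₁.trace = n := by
      have hMtr : M.trace = (n + 1 : ℕ) := (trace_submatrix_equiv' g P.1).trans P.2.2.2
      rw [hblock] at hMtr
      simpa [trace, Fintype.sum_sum_type] using hMtr
    refine ⟨⟨M.toBlocks₁₁, hM.submatrix Sum.inl, hidem, htrace⟩, Subtype.ext ?_⟩
    change (fromBlocks M.toBlocks₁₁ 0 0 1).submatrix g.symm g.symm = P.1
    rw [← hblock, submatrix_submatrix, Equiv.self_comp_symm, submatrix_id_id]

lemma hasCompression_grassmannInclusion {K E : Type*} [TopologicalSpace K] [CompactSpace K]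
    [NormedAddCommGroup E] [NormedSpace ℝ E] [FiniteDimensional ℝ E] (hK : IsRetract K E)
    (hE : Module.finrank ℝ E ≤ n) : HasCompression K (grassmannInclusion n ℓ) := by
  intro F
  obtain ⟨G, hFG, hG⟩ := MatGrassmannian.exists_homotopicRel_fixing_single hK
    (Nat.lt_succ_of_le hE) F (grassmannReindex n ℓ (Sum.inr 0))
  have hlift (x : K) : G x ∈ Set.range (grassmannInclusion n ℓ) :=
    range_grassmannInclusion.ge (hG x)
  choose G' hG' using hlift
  have hG'_cont : Continuous G' := by
    rw [isEmbedding_grassmannInclusion.continuous_iff]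
    exact G.continuous.congr fun x => (hG' x).symm
  refine ⟨⟨G', hG'_cont⟩, ?_⟩
  rw [range_grassmannInclusion]
  rwa [show (grassmannInclusion n ℓ).comp ⟨G', hG'_cont⟩ = G from ContinuousMap.ext hG']

end GrassmannInclusion

/-- The stabilization map `i^G : G_{n,ℓ} → G_{n+1,ℓ}` induces an
isomorphism on `π_i` for `0 ≤ i < n` and an epimorphism for `i = n`. -/
theorem grassmann_inclusion_isIso_pi_lt_and_surj_pi_eq (n ℓ : ℕ) (a : MatGrassmannian n ℓ) :
    (∀ i : ℕ, i < n →
      Function.Bijective (HomotopyGroup.induced (Fin i) (grassmannInclusion n ℓ) a)) ∧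
    Function.Surjective (HomotopyGroup.induced (Fin n) (grassmannInclusion n ℓ) a) := by
  have hinj : Function.Injective (grassmannInclusion n ℓ) :=
    isEmbedding_grassmannInclusion.injective
  have hcube (k : ℕ) : IsRetract (Fin k → I) (Fin k → ℝ) :=
    IsRetract.pi fun _ => IsRetract.unitInterval
  have hsurj (k : ℕ) (hk : k ≤ n) :
      Function.Surjective (HomotopyGroup.induced (Fin k) (grassmannInclusion n ℓ) a) :=
    (hasCompression_grassmannInclusion (hcube k) (by simpa using hk)).surjective_induced hinj a
  refine ⟨fun i hi => ⟨?_, hsurj i hi.le⟩, hsurj n le_rfl⟩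
  have hdim : Module.finrank ℝ (ℝ × (Fin i → ℝ)) ≤ n := by
    simpa [add_comm 1 i] using hi
  exact (hasCompression_grassmannInclusion (IsRetract.unitInterval.prod (hcube i))
    hdim).injective_induced hinj a
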